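/- Let F ⊆ Sym²(ℝⁿ) be an ST-invariant cone subequation with finite Riesz characteristic p, and let u be F-subharmonic on an open set X ⊆ ℝⁿ with u not identically −∞ on any ball contained in X. For x ∈ X and small t ≥ 0 set M(u, x, t) = sup_{|y−x| ≤ t} u. Then for each x ∈ X the density Θ^M(u, x) = lim_{0<s<t, t→0} (M(u, x, t) − M(u, x, s))/(K_p(t) − K_p(s)) exists and lies in [0, ∞), and the function x ↦ Θ^M(u, x) is upper semicontinuous on X; equivalently, for every c > 0 the set E_c = {x ∈ X : Θ^M(u, x) ≥ c} is closed in X. -/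

import Mathlib

open Set Filter Topology Matrix

noncomputable section

abbrev EucSp (n : ℕ) := EuclideanSpace ℝ (Fin n)

/-- The rank-one orthogonal projection matrix `P_e = e eᵀ` associated to a vector `e`. -/
def projMat {n : ℕ} (e : EucSp n) : Matrix (Fin n) (Fin n) ℝ :=
  Matrix.of fun i j => e i * e j

/-- A (pure second-order, constant coefficient) subequation: a closed set of symmetric
matrices satisfying positivity `F + 𝒫 ⊆ F`. -/
def IsSubequation {n : ℕ} (F : Set (Matrix (Fin n) (Fin n) ℝ)) : Prop :=
  (∀ A ∈ F, A.IsSymm) ∧ IsClosed F ∧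
    ∀ A ∈ F, ∀ P : Matrix (Fin n) (Fin n) ℝ, P.PosSemidef → A + P ∈ F

/-- A cone subequation. -/
def IsConeSubequation {n : ℕ} (F : Set (Matrix (Fin n) (Fin n) ℝ)) : Prop :=
  IsSubequation F ∧ ∀ A ∈ F, ∀ t : ℝ, 0 ≤ t → t • A ∈ F

/-- `F` is invariant under a closed subgroup of `O(n)` acting transitively on the
unit sphere. -/
def STInvariant {n : ℕ} (F : Set (Matrix (Fin n) (Fin n) ℝ)) : Prop :=
  ∃ G : Set (Matrix (Fin n) (Fin n) ℝ),
    IsClosed G ∧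
    G ⊆ (Matrix.orthogonalGroup (Fin n) ℝ : Set (Matrix (Fin n) (Fin n) ℝ)) ∧
    (1 : Matrix (Fin n) (Fin n) ℝ) ∈ G ∧
    (∀ g ∈ G, ∀ h ∈ G, g * h ∈ G) ∧
    (∀ g ∈ G, g⁻¹ ∈ G) ∧
    (∀ x y : EucSp n, ‖x‖ = 1 → ‖y‖ = 1 → ∃ g ∈ G, Matrix.toEuclideanLin g x = y) ∧
    (∀ g ∈ G, ∀ A ∈ F, gᵀ * A * g ∈ F)

/-- The interior of `F` relative to the subspace `Sym²(ℝⁿ)` of symmetric matrices. -/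
def symInterior {n : ℕ} (F : Set (Matrix (Fin n) (Fin n) ℝ)) :
    Set (Matrix (Fin n) (Fin n) ℝ) :=
  {A | ∃ U ∈ 𝓝 A, ∀ B ∈ U, B.IsSymm → B ∈ F}

/-- The frontier of `F` relative to the subspace `Sym²(ℝⁿ)` of symmetric matrices. -/
def symFrontier {n : ℕ} (F : Set (Matrix (Fin n) (Fin n) ℝ)) :
    Set (Matrix (Fin n) (Fin n) ℝ) :=
  closure F \ symInterior F

/-- `F` has finite (increasing) Riesz characteristic `p`:
`P_{e⊥} − (p−1) P_e ∈ ∂F` for every unit vector `e`. -/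
def HasRieszChar {n : ℕ} (F : Set (Matrix (Fin n) (Fin n) ℝ)) (p : ℝ) : Prop :=
  1 ≤ p ∧ ∀ e : EucSp n, ‖e‖ = 1 →
    ((1 : Matrix (Fin n) (Fin n) ℝ) - projMat e) - (p - 1) • projMat e ∈ symFrontier F

/-- `F` has finite decreasing Riesz characteristic `q`:
`−P_{e⊥} + (q−1) P_e ∈ ∂F` for every unit vector `e`. -/
def HasDualRieszChar {n : ℕ} (F : Set (Matrix (Fin n) (Fin n) ℝ)) (q : ℝ) : Prop :=
  1 ≤ q ∧ ∀ e : EucSp n, ‖e‖ = 1 →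
    -((1 : Matrix (Fin n) (Fin n) ℝ) - projMat e) + (q - 1) • projMat e ∈ symFrontier F

/-- The Hessian matrix of a function `φ : ℝⁿ → ℝ` at `x`. -/
def hess {n : ℕ} (φ : EucSp n → ℝ) (x : EucSp n) : Matrix (Fin n) (Fin n) ℝ :=
  Matrix.of fun i j =>
    iteratedFDeriv ℝ 2 φ x ![EuclideanSpace.single i (1 : ℝ), EuclideanSpace.single j (1 : ℝ)]

/-- `u` is `F`-subharmonic (a viscosity subsolution) on `X`. -/
def IsFSubharmonicOn {n : ℕ} (F : Set (Matrix (Fin n) (Fin n) ℝ))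
    (X : Set (EucSp n)) (u : EucSp n → EReal) : Prop :=
  UpperSemicontinuousOn u X ∧ (∀ x ∈ X, u x < ⊤) ∧
    ∀ x₀ ∈ X, ∀ φ : EucSp n → ℝ, ContDiffAt ℝ 2 φ x₀ →
      (∀ᶠ x in 𝓝[X] x₀, u x ≤ ((φ x : ℝ) : EReal)) → u x₀ = ((φ x₀ : ℝ) : EReal) →
      hess φ x₀ ∈ F

/-- The dual subequation `F̃ = {A : −A ∉ Int F}` (interior relative to `Sym²(ℝⁿ)`). -/
def dualSubeq {n : ℕ} (F : Set (Matrix (Fin n) (Fin n) ℝ)) :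
    Set (Matrix (Fin n) (Fin n) ℝ) :=
  {A | A.IsSymm ∧ -A ∉ symInterior F}

/-- `u` is `F`-harmonic on `X`: `u` is `F`-subharmonic and `−u` is `F̃`-subharmonic. -/
def IsFHarmonicOn {n : ℕ} (F : Set (Matrix (Fin n) (Fin n) ℝ))
    (X : Set (EucSp n)) (u : EucSp n → ℝ) : Prop :=
  IsFSubharmonicOn F X (fun x => ((u x : ℝ) : EReal)) ∧
  IsFSubharmonicOn (dualSubeq F) X (fun x => ((-(u x) : ℝ) : EReal))

/-- The Riesz kernel `K_p`. -/
def rieszKernel (p t : ℝ) : ℝ :=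
  if p < 2 then t ^ (2 - p) else if p = 2 then Real.log t else -(t ^ (2 - p))

/-- The ball maximum `M(u, x, t) = sup_{|y − x| ≤ t} u(y)`. -/
def ballSup {n : ℕ} (u : EucSp n → EReal) (x : EucSp n) (t : ℝ) : EReal :=
  sSup (u '' Metric.closedBall x t)

/-! Outside the centre the Riesz kernel `K_p(|y - x|)` has Hessian `c (P_{e⊥} - (p - 1) P_e)` with
`c > 0`, which lies on `∂F`. Hence `a + b K_p(|y - x|) + ε (t² - |y - x|²)` with `b, ε > 0` has its
Hessian outside `F`, and no `F`-subharmonic function touches it from below. Comparison on annuli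
therefore makes `M(u, x, ·)` convex as a function of `K_p`: its difference quotients decrease as
the radii shrink, and they converge to their infimum `Θ`. If `Θ(x) < θ`, then some quotient at `x`
is below `θ`; balls about a nearby `z`, with radii changed by `|z - x|`, are nested with those
about `x`, so a quotient at `z` is below `θ` too. -/

section Hessian

variable {E : Type*} [NormedAddCommGroup E] [InnerProductSpace ℝ E] {x : E}

lemma hasFDerivAt_norm_of_ne_zero (hx : x ≠ 0) :
    HasFDerivAt (fun y : E => ‖y‖) (‖x‖⁻¹ • innerSL ℝ x) x := by
  have hρ : ‖x‖ ≠ 0 := norm_ne_zero_iff.2 hx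
  have hsqrt := (hasStrictFDerivAt_norm_sq x).hasFDerivAt.sqrt (pow_ne_zero 2 hρ)
  simp only [Real.sqrt_sq (norm_nonneg _)] at hsqrt
  refine hsqrt.congr_fderiv ?_
  ext v
  simp only [_root_.smul_apply, smul_eq_mul, nsmul_eq_mul]
  push_cast
  field_simp

lemma hasFDerivAt_comp_norm {f : ℝ → ℝ} {f' : ℝ} (hx : x ≠ 0) (hf : HasDerivAt f f' ‖x‖) :
    HasFDerivAt (fun y : E => f ‖y‖) ((f' / ‖x‖) • innerSL ℝ x) x := by
  refine (hf.comp_hasFDerivAt x (hasFDerivAt_norm_of_ne_zero hx)).congr_fderiv ?_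
  rw [smul_smul, div_eq_mul_inv]

lemma iteratedFDeriv_two_comp_norm {f f' : ℝ → ℝ} {f'' : ℝ} (hx : x ≠ 0)
    (hf : ∀ᶠ ρ in 𝓝 ‖x‖, HasDerivAt f (f' ρ) ρ) (hf' : HasDerivAt f' f'' ‖x‖) (v w : E) :
    iteratedFDeriv ℝ 2 (fun y : E => f ‖y‖) x ![v, w] =
      f' ‖x‖ / ‖x‖ * inner ℝ v w + (f'' - f' ‖x‖ / ‖x‖) *
        (inner ℝ (NormedSpace.normalize x) v * inner ℝ (NormedSpace.normalize x) w) := by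
  have hρ : ‖x‖ ≠ 0 := norm_ne_zero_iff.2 hx
  -- `innerSL ℝ` is only conjugate-linear by its type; over `ℝ` it is a bilinear form `B`.
  obtain ⟨B, hB⟩ : ∃ B : E →L[ℝ] E →L[ℝ] ℝ, ∀ y, B y = innerSL ℝ y := ⟨innerSL ℝ, fun _ => rfl⟩
  have hfderiv : fderiv ℝ (fun y : E => f ‖y‖) =ᶠ[𝓝 x] fun y => (f' ‖y‖ / ‖y‖) • B y := by
    filter_upwards [continuous_norm.continuousAt.eventually hf, isOpen_ne.mem_nhds hx]
      with y hfy hy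
    rw [hB, (hasFDerivAt_comp_norm hy hfy).fderiv]
  have hcoeff : HasFDerivAt (fun y : E => f' ‖y‖ / ‖y‖)
      (((f'' * ‖x‖ - f' ‖x‖ * 1) / ‖x‖ ^ 2 / ‖x‖) • innerSL ℝ x) x :=
    hasFDerivAt_comp_norm hx (hf'.fun_div (hasDerivAt_id' ‖x‖) hρ)
  rw [iteratedFDeriv_two_apply, hfderiv.fderiv_eq, (hcoeff.fun_smul B.hasFDerivAt).fderiv]
  simp only [_root_.add_apply, _root_.smul_apply,
    ContinuousLinearMap.smulRight_apply, hB, innerSL_apply_apply, NormedSpace.normalize,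
    real_inner_smul_left, smul_eq_mul, Matrix.cons_val_zero, Matrix.cons_val_one]
  field_simp

end Hessian

section HessianMatrix

variable {n : ℕ} {x y : EucSp n}

lemma hess_add_const (φ : EucSp n → ℝ) (c : ℝ) (y : EucSp n) :
    hess (fun z => φ z + c) y = hess φ y := by
  ext i j
  have hfderiv : fderiv ℝ (fun z => φ z + c) = fderiv ℝ φ := funext fun _ => fderiv_add_const c
  simp only [hess, Matrix.of_apply, iteratedFDeriv_two_apply, hfderiv]

lemma hess_comp_norm_sub {f f' : ℝ → ℝ} {f'' : ℝ} (hyx : y ≠ x)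
    (hf : ∀ᶠ ρ in 𝓝 ‖y - x‖, HasDerivAt f (f' ρ) ρ) (hf' : HasDerivAt f' f'' ‖y - x‖) :
    hess (fun z => f ‖z - x‖) y =
      (f' ‖y - x‖ / ‖y - x‖) • (1 - projMat (NormedSpace.normalize (y - x))) +
        f'' • projMat (NormedSpace.normalize (y - x)) := by
  ext i j
  have h := iteratedFDeriv_two_comp_norm (sub_ne_zero.2 hyx) hf hf'
    (EuclideanSpace.single i 1) (EuclideanSpace.single j 1)
  rw [← iteratedFDeriv_comp_sub] at h
  simp only [hess, Matrix.of_apply, h, projMat, Matrix.one_apply, Matrix.add_apply,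
    Matrix.smul_apply, Matrix.sub_apply, smul_eq_mul, EuclideanSpace.inner_single_right,
    PiLp.single_apply, one_mul, conj_trivial, eq_comm (a := j)]
  ring

end HessianMatrix

section RieszKernel

variable {p t : ℝ}

/-- The factor `c` in the derivative `c t^(1-p)` of the Riesz kernel `K_p`. -/
def rieszConst (p : ℝ) : ℝ :=
  if p = 2 then 1 else |2 - p|

lemma rieszConst_pos (p : ℝ) : 0 < rieszConst p := by
  unfold rieszConst
  split_ifs with hp
  · exact one_pos
  · exact abs_pos.2 (sub_ne_zero.2 (Ne.symm hp))

lemma hasDerivAt_rieszKernel (p : ℝ) (ht : 0 < t) :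
    HasDerivAt (rieszKernel p) (rieszConst p * t ^ (1 - p)) t := by
  have hpow : HasDerivAt (fun s : ℝ => s ^ (2 - p)) ((2 - p) * t ^ (1 - p)) t := by
    convert Real.hasDerivAt_rpow_const (p := 2 - p) (Or.inl ht.ne') using 3
    ring
  unfold rieszKernel rieszConst
  rcases lt_trichotomy p 2 with hp | rfl | hp
  · simpa [hp, hp.ne, abs_of_pos (sub_pos.2 hp)] using hpow
  · simpa [show (1 : ℝ) - 2 = -1 by norm_num, Real.rpow_neg_one] using Real.hasDerivAt_log ht.ne'
  · simpa [hp.not_gt, hp.ne', abs_of_neg (sub_neg.2 hp), ← neg_mul] using hpow.fun_neg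

lemma contDiffAt_rieszKernel (p : ℝ) {k : WithTop ℕ∞} (ht : 0 < t) :
    ContDiffAt ℝ k (rieszKernel p) t := by
  unfold rieszKernel
  rcases lt_trichotomy p 2 with hp | rfl | hp
  · simpa [hp] using Real.contDiffAt_rpow_const_of_ne ht.ne'
  · simpa using Real.contDiffAt_log.2 ht.ne'
  · simpa [hp.not_gt, hp.ne'] using (Real.contDiffAt_rpow_const_of_ne ht.ne').neg

lemma continuousOn_rieszKernel (p : ℝ) : ContinuousOn (rieszKernel p) (Ioi 0) :=
  fun _ ht => (contDiffAt_rieszKernel p (k := 0) ht).continuousAt.continuousWithinAt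

lemma strictMonoOn_rieszKernel (p : ℝ) : StrictMonoOn (rieszKernel p) (Ioi 0) := by
  refine strictMonoOn_of_deriv_pos (convex_Ioi 0) (continuousOn_rieszKernel p) fun t ht => ?_
  rw [interior_Ioi, mem_Ioi] at ht
  rw [(hasDerivAt_rieszKernel p ht).deriv]
  exact mul_pos (rieszConst_pos p) (Real.rpow_pos_of_pos ht _)

end RieszKernel

section Subequation

variable {n : ℕ} {F : Set (Matrix (Fin n) (Fin n) ℝ)} {p : ℝ}

open scoped Matrix.Norms.L2Operator in
lemma posSemidef_add_smul_one {C : Matrix (Fin n) (Fin n) ℝ} {ε : ℝ}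
    (hC : C.IsSymm) (hε : ‖C‖ ≤ ε) : (C + ε • (1 : Matrix (Fin n) (Fin n) ℝ)).PosSemidef := by
  have hsymm : (C + ε • (1 : Matrix (Fin n) (Fin n) ℝ)).IsSymm := hC.add (isSymm_one.smul ε)
  refine .of_dotProduct_mulVec_nonneg hsymm fun v => ?_
  set w : EucSp n := WithLp.toLp 2 v
  have hquad : star v ⬝ᵥ ((C + ε • (1 : Matrix (Fin n) (Fin n) ℝ)) *ᵥ v) =
      inner ℝ w (Matrix.toEuclideanCLM (𝕜 := ℝ) C w) + ε * ‖w‖ ^ 2 := by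
    rw [Matrix.inner_toEuclideanCLM, ← real_inner_self_eq_norm_sq, Matrix.add_mulVec,
      Matrix.smul_mulVec, Matrix.one_mulVec, dotProduct_add, dotProduct_smul, star_trivial]
    rfl
  have hcauchy : |inner ℝ w (Matrix.toEuclideanCLM (𝕜 := ℝ) C w)| ≤ ε * ‖w‖ ^ 2 :=
    calc |inner ℝ w (Matrix.toEuclideanCLM (𝕜 := ℝ) C w)|
        ≤ ‖w‖ * ‖Matrix.toEuclideanCLM (𝕜 := ℝ) C w‖ := abs_real_inner_le_norm _ _
      _ ≤ ‖w‖ * (ε * ‖w‖) := by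
          gcongr
          exact (Matrix.toEuclideanCLM (𝕜 := ℝ) C).le_of_opNorm_le hε w
      _ = ε * ‖w‖ ^ 2 := by ring
  linarith [neg_le_of_abs_le hcauchy]

open scoped Matrix.Norms.L2Operator in
lemma IsSubequation.add_smul_one_mem_symInterior (hF : IsSubequation F)
    {A : Matrix (Fin n) (Fin n) ℝ} (hA : A ∈ F) {ε : ℝ} (hε : 0 < ε) :
    A + ε • (1 : Matrix (Fin n) (Fin n) ℝ) ∈ symInterior F := by
  set A' := A + ε • (1 : Matrix (Fin n) (Fin n) ℝ) with hA'
  have hA'symm : A'.IsSymm := (hF.1 A hA).add (isSymm_one.smul ε)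
  refine ⟨Metric.ball A' ε, Metric.ball_mem_nhds A' hε, fun B hB hBsymm => ?_⟩
  have hpos := posSemidef_add_smul_one (hBsymm.sub hA'symm) (mem_ball_iff_norm.1 hB).le
  have hdecomp : B = A + (B - A' + ε • (1 : Matrix (Fin n) (Fin n) ℝ)) := by rw [hA']; abel
  exact hdecomp ▸ hF.2.2 A hA _ hpos

lemma HasRieszChar.smul_sub_smul_one_notMem (hchar : HasRieszChar F p)
    (hF : IsConeSubequation F) {e : EucSp n} (he : ‖e‖ = 1) {c ε : ℝ} (hc : 0 < c) (hε : 0 < ε) :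
    c • ((1 - projMat e) - (p - 1) • projMat e) - ε • (1 : Matrix (Fin n) (Fin n) ℝ) ∉ F := by
  intro hmem
  have hscaled := hF.2 _ hmem c⁻¹ (inv_nonneg.2 hc.le)
  rw [smul_sub, smul_smul, smul_smul, inv_mul_cancel₀ hc.ne', one_smul] at hscaled
  have hint := hF.1.add_smul_one_mem_symInterior hscaled (mul_pos (inv_pos.2 hc) hε)
  rw [sub_add_cancel] at hint
  exact (hchar.2 e he).2 hint

end Subequation

section Comparison

lemma exists_touching_of_upperSemicontinuousOn {α : Type*} [TopologicalSpace α] {A : Set α}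
    {u : α → EReal} {φ : α → ℝ} (hu : UpperSemicontinuousOn u A) (hA : IsCompact A)
    (htop : ∀ y ∈ A, u y < ⊤) (hφ : ContinuousOn φ A) {y : α} (hy : y ∈ A)
    (hlt : (φ y : EReal) < u y) :
    ∃ z ∈ A, ∃ c : ℝ, 0 < c ∧ u z = (φ z + c : ℝ) ∧ ∀ v ∈ A, u v ≤ (φ v + c : ℝ) := by
  have husc : UpperSemicontinuousOn (fun z => u z - φ z) A := by
    simp only [sub_eq_add_neg, ← EReal.coe_neg]
    exact hu.add' (continuous_coe_real_ereal.comp_continuousOn hφ.neg).upperSemicontinuousOn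
      fun z _ => EReal.continuousAt_add (by simp) (by simp)
  obtain ⟨z, hz, hmax⟩ := husc.exists_isMaxOn ⟨y, hy⟩ hA
  have hpos : 0 < u z - φ z := (EReal.sub_pos.2 hlt).trans_le (hmax hy)
  obtain ⟨w, hw⟩ : ∃ w : ℝ, (w : EReal) = u z :=
    ⟨_, EReal.coe_toReal (htop z hz).ne fun hbot => by simp [hbot] at hpos⟩
  rw [← hw, ← EReal.coe_sub, EReal.coe_pos] at hpos
  refine ⟨z, hz, w - φ z, hpos, by simp [hw], fun v hv => ?_⟩
  have hle : u v - φ v ≤ (w - φ z : ℝ) := by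
    rw [EReal.coe_sub, hw]
    exact hmax hv
  rw [add_comm, EReal.coe_add]
  exact EReal.sub_le_iff_le_add (by simp) (by simp) |>.1 hle

variable {n : ℕ} {F : Set (Matrix (Fin n) (Fin n) ℝ)} {X A : Set (EucSp n)}
  {u : EucSp n → EReal} {φ : EucSp n → ℝ}

theorem IsFSubharmonicOn.le_of_hess_notMem (hu : IsFSubharmonicOn F X u) (hA : IsCompact A)
    (hAX : A ⊆ X) (hφ : ContinuousOn φ A) (hφ2 : ∀ y ∈ interior A, ContDiffAt ℝ 2 φ y)
    (hφF : ∀ y ∈ interior A, hess φ y ∉ F) (hbdry : ∀ y ∈ frontier A, u y ≤ φ y) :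
    ∀ y ∈ A, u y ≤ φ y := by
  intro y hy
  by_contra! hlt
  obtain ⟨z, hz, c, hc, huz, hle⟩ :=
    exists_touching_of_upperSemicontinuousOn (hu.1.mono hAX) hA (fun y hy => hu.2.1 y (hAX hy))
      hφ hy hlt
  have hzint : z ∈ interior A := by
    by_contra hzint
    have := huz ▸ hbdry z ⟨subset_closure hz, hzint⟩
    exact absurd (EReal.coe_le_coe_iff.1 this) (by linarith)
  refine hφF z hzint (hess_add_const φ c z ▸ hu.2.2 z (hAX hz) (fun y => φ y + c)
    ((hφ2 z hzint).add contDiffAt_const) ?_ huz)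
  filter_upwards [nhdsWithin_le_nhds (mem_interior_iff_mem_nhds.1 hzint)] using hle

end Comparison

section Barrier

variable {n : ℕ} {F : Set (Matrix (Fin n) (Fin n) ℝ)} {p : ℝ} {X : Set (EucSp n)}
  {u : EucSp n → EReal} {x y : EucSp n}

/-- The annulus `{y : r ≤ |y - x| ≤ t}`, on which `u` is compared with Riesz kernels. -/
def closedAnnulus (x : EucSp n) (r t : ℝ) : Set (EucSp n) :=
  {y | ‖y - x‖ ∈ Icc r t}

lemma closedAnnulus_subset_closedBall (x : EucSp n) (r t : ℝ) :
    closedAnnulus x r t ⊆ Metric.closedBall x t :=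
  fun _ hy => mem_closedBall_iff_norm.2 hy.2

lemma isClosed_closedAnnulus (x : EucSp n) (r t : ℝ) : IsClosed (closedAnnulus x r t) :=
  isClosed_Icc.preimage (continuous_id.sub continuous_const).norm

lemma isCompact_closedAnnulus (x : EucSp n) (r t : ℝ) : IsCompact (closedAnnulus x r t) :=
  (isCompact_closedBall x t).of_isClosed_subset (isClosed_closedAnnulus x r t)
    (closedAnnulus_subset_closedBall x r t)

lemma norm_sub_eq_of_mem_frontier_closedAnnulus {r t : ℝ}
    (hy : y ∈ frontier (closedAnnulus x r t)) : ‖y - x‖ = r ∨ ‖y - x‖ = t := by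
  obtain ⟨hr, ht⟩ := (isClosed_closedAnnulus x r t).frontier_subset hy
  have hmem : ‖y - x‖ ∈ frontier (Icc r t) :=
    (continuous_id.sub continuous_const).norm.frontier_preimage_subset (Icc r t) hy
  simpa [frontier_Icc (hr.trans ht)] using hmem

/-- The barrier `a + b K_p(ρ) + ε (t² - ρ²)`. The Hessian of `K_p(|y - x|)` lies on `∂F`, and the
last term, which vanishes on the outer sphere, pushes the Hessian out of `F`. -/
def rieszBarrier (p a b ε t ρ : ℝ) : ℝ :=
  a + b * rieszKernel p ρ + ε * (t ^ 2 - ρ ^ 2)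

lemma contDiffAt_rieszBarrier (p a b ε t : ℝ) {k : WithTop ℕ∞} {ρ : ℝ} (hρ : 0 < ρ) :
    ContDiffAt ℝ k (rieszBarrier p a b ε t) ρ :=
  (contDiffAt_const.add (contDiffAt_const.mul (contDiffAt_rieszKernel p hρ))).add
    (contDiffAt_const.mul (contDiffAt_const.sub (contDiffAt_id.pow 2)))

lemma hasDerivAt_rieszBarrier (p a b ε t : ℝ) {ρ : ℝ} (hρ : 0 < ρ) :
    HasDerivAt (rieszBarrier p a b ε t)
      (b * (rieszConst p * ρ ^ (1 - p)) - 2 * ε * ρ) ρ := by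
  refine ((((hasDerivAt_rieszKernel p hρ).const_mul b).const_add a).add
    (((hasDerivAt_pow 2 ρ).const_sub (t ^ 2)).const_mul ε)).congr_deriv ?_
  push_cast
  ring

lemma hess_rieszBarrier (p a b ε t : ℝ) (hyx : y ≠ x) :
    hess (fun z => rieszBarrier p a b ε t ‖z - x‖) y =
      (b * rieszConst p * ‖y - x‖ ^ (-p)) •
        ((1 - projMat (NormedSpace.normalize (y - x))) -
          (p - 1) • projMat (NormedSpace.normalize (y - x))) - (2 * ε) • 1 := by
  have hρ : 0 < ‖y - x‖ := norm_sub_pos_iff.2 hyx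
  have hsecond : HasDerivAt (fun ρ => b * (rieszConst p * ρ ^ (1 - p)) - 2 * ε * ρ)
      (b * (rieszConst p * ((1 - p) * ‖y - x‖ ^ (-p))) - 2 * ε) ‖y - x‖ := by
    refine (((((Real.hasDerivAt_rpow_const (p := 1 - p) (Or.inl hρ.ne')).const_mul
      (rieszConst p)).const_mul b).sub ((hasDerivAt_id' ‖y - x‖).const_mul (2 * ε))).congr_deriv ?_)
    rw [show 1 - p - 1 = -p by ring, mul_one]
  have hpow : ‖y - x‖ ^ (1 - p) = ‖y - x‖ ^ (-p) * ‖y - x‖ := by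
    rw [← Real.rpow_add_one hρ.ne', neg_add_eq_sub]
  rw [hess_comp_norm_sub hyx
    ((lt_mem_nhds hρ).mono fun ρ hρ => hasDerivAt_rieszBarrier p a b ε t hρ) hsecond]
  have hquot : (b * (rieszConst p * ‖y - x‖ ^ (1 - p)) - 2 * ε * ‖y - x‖) / ‖y - x‖ =
      b * rieszConst p * ‖y - x‖ ^ (-p) - 2 * ε := by
    rw [hpow]
    field_simp
  rw [hquot]
  module

theorem IsFSubharmonicOn.le_rieszKernel_of_frontier (hu : IsFSubharmonicOn F X u)
    (hF : IsConeSubequation F) (hchar : HasRieszChar F p) {r t a b : ℝ} (hr : 0 < r) (hb : 0 < b)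
    (hAX : closedAnnulus x r t ⊆ X)
    (hbdry : ∀ y ∈ frontier (closedAnnulus x r t), u y ≤ (a + b * rieszKernel p ‖y - x‖ : ℝ)) :
    ∀ y ∈ closedAnnulus x r t, u y ≤ (a + b * rieszKernel p ‖y - x‖ : ℝ) := by
  intro y hy
  have hpos : ∀ z ∈ closedAnnulus x r t, 0 < ‖z - x‖ := fun z hz => hr.trans_le hz.1
  have hC2 : ∀ z ∈ closedAnnulus x r t, ∀ ε,
      ContDiffAt ℝ 2 (fun z => rieszBarrier p a b ε t ‖z - x‖) z := fun z hz ε =>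
    (contDiffAt_rieszBarrier p a b ε t (hpos z hz)).comp z
      ((contDiffAt_id.sub contDiffAt_const).norm ℝ (norm_pos_iff.1 (hpos z hz)))
  have hbarrier : ∀ ε > 0, u y ≤ rieszBarrier p a b ε t ‖y - x‖ := by
    intro ε hε
    refine hu.le_of_hess_notMem (φ := fun z => rieszBarrier p a b ε t ‖z - x‖)
      (isCompact_closedAnnulus x r t) hAX
      (fun z hz => (hC2 z hz ε).continuousAt.continuousWithinAt)
      (fun z hz => hC2 z (interior_subset hz) ε) (fun z hz => ?_) (fun z hz => ?_) y hy
    · have hzpos := hpos z (interior_subset hz)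
      have hzx := norm_sub_pos_iff.1 hzpos
      rw [hess_rieszBarrier p a b ε t hzx]
      exact hchar.smul_sub_smul_one_notMem hF
        (NormedSpace.norm_normalize (sub_ne_zero.2 hzx))
        (mul_pos (mul_pos hb (rieszConst_pos p)) (Real.rpow_pos_of_pos hzpos _)) (by positivity)
    · have hzA := (isClosed_closedAnnulus x r t).frontier_subset hz
      refine (hbdry z hz).trans (EReal.coe_le_coe_iff.2 (le_add_of_nonneg_right ?_))
      have := pow_le_pow_left₀ (norm_nonneg _) hzA.2 2
      exact mul_nonneg hε.le (sub_nonneg.2 this)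
  have hlim : Tendsto (fun ε => (rieszBarrier p a b ε t ‖y - x‖ : EReal)) (𝓝[>] 0)
      (𝓝 (a + b * rieszKernel p ‖y - x‖ : ℝ)) := by
    have hcont : Continuous fun ε => (rieszBarrier p a b ε t ‖y - x‖ : EReal) :=
      continuous_coe_real_ereal.comp
        (continuous_const.add (continuous_id.mul continuous_const))
    simpa [rieszBarrier] using (hcont.tendsto 0).mono_left nhdsWithin_le_nhds
  exact ge_of_tendsto hlim (eventually_mem_nhdsWithin.mono hbarrier)

end Barrier

section Density

variable {n : ℕ} {X : Set (EucSp n)} {u : EucSp n → EReal} {K : ℝ → ℝ} {x x' : EucSp n}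
  {s t : ℝ}

/-- The difference quotient of the ball maximum `M(u, x, ·)` with respect to a kernel `K`. -/
def ballSupSlope (K : ℝ → ℝ) (u : EucSp n → EReal) (x : EucSp n) (s t : ℝ) : ℝ :=
  ((ballSup u x t).toReal - (ballSup u x s).toReal) / (K t - K s)

/-- The density `Θ^M(u, x)` with respect to a kernel `K`. It is encoded as the infimum of the
difference quotients over the balls in `X`, which is their limit as soon as they increase with
the radii. -/
def kernelDensity (K : ℝ → ℝ) (X : Set (EucSp n)) (u : EucSp n → EReal) (x : EucSp n) : ℝ :=
  sInf {θ | ∃ s t, 0 < s ∧ s < t ∧ Metric.closedBall x t ⊆ X ∧ ballSupSlope K u x s t = θ}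

/-- The ball maximum `M(u, x, t)` is a real number for all closed balls in `X`, so that taking
`EReal.toReal` of it loses nothing. -/
def HasFiniteBallSup (X : Set (EucSp n)) (u : EucSp n → EReal) : Prop :=
  ∀ ⦃x t⦄, 0 < t → Metric.closedBall x t ⊆ X → ballSup u x t ≠ ⊥ ∧ ballSup u x t ≠ ⊤

lemma ballSup_mono (u : EucSp n → EReal) (h : Metric.closedBall x s ⊆ Metric.closedBall x' t) :
    ballSup u x s ≤ ballSup u x' t :=
  sSup_le_sSup (image_mono h)

lemma le_ballSup (u : EucSp n → EReal) {y : EucSp n} (hy : ‖y - x‖ ≤ t) : u y ≤ ballSup u x t :=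
  le_sSup (mem_image_of_mem u (mem_closedBall_iff_norm.2 hy))

lemma ballSup_lt_top (hu : UpperSemicontinuousOn u (Metric.closedBall x t))
    (htop : ∀ y ∈ Metric.closedBall x t, u y < ⊤) : ballSup u x t < ⊤ := by
  rcases (Metric.closedBall x t).eq_empty_or_nonempty with hempty | hne
  · simp [ballSup, hempty]
  · obtain ⟨z, hz, hmax⟩ := hu.exists_isMaxOn hne (isCompact_closedBall x t)
    exact (sSup_le (forall_mem_image.2 fun y hy => hmax hy)).trans_lt (htop z hz)

lemma IsFSubharmonicOn.hasFiniteBallSup {F : Set (Matrix (Fin n) (Fin n) ℝ)}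
    (hu : IsFSubharmonicOn F X u)
    (hne : ∀ y : EucSp n, ∀ r : ℝ, 0 < r → Metric.closedBall y r ⊆ X →
      ∃ x ∈ Metric.closedBall y r, u x ≠ ⊥) : HasFiniteBallSup X u := by
  intro x t ht hX
  obtain ⟨z, hz, hbot⟩ := hne x t ht hX
  exact ⟨ne_bot_of_le_ne_bot hbot (le_sSup (mem_image_of_mem u hz)),
    (ballSup_lt_top (hu.1.mono hX) fun y hy => hu.2.1 y (hX hy)).ne⟩

namespace HasFiniteBallSup

lemma toReal_ballSup_mono (hfin : HasFiniteBallSup X u) (hs : 0 < s) (ht : 0 < t)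
    (hsub : Metric.closedBall x s ⊆ Metric.closedBall x' t) (hX : Metric.closedBall x' t ⊆ X) :
    (ballSup u x s).toReal ≤ (ballSup u x' t).toReal :=
  EReal.toReal_le_toReal (ballSup_mono u hsub) (hfin hs (hsub.trans hX)).1 (hfin ht hX).2

lemma ballSupSlope_nonneg (hfin : HasFiniteBallSup X u) (hK : MonotoneOn K (Ioi 0))
    (hs : 0 < s) (hst : s < t) (hX : Metric.closedBall x t ⊆ X) : 0 ≤ ballSupSlope K u x s t :=
  have ht := hs.trans hst
  div_nonneg
    (sub_nonneg.2 (hfin.toReal_ballSup_mono hs ht (Metric.closedBall_subset_closedBall hst.le) hX))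
    (sub_nonneg.2 (hK hs ht hst.le))

lemma kernelDensity_nonneg (hfin : HasFiniteBallSup X u) (hK : MonotoneOn K (Ioi 0))
    (x : EucSp n) : 0 ≤ kernelDensity K X u x := by
  refine Real.sInf_nonneg ?_
  rintro _ ⟨s, t, hs, hst, hX, rfl⟩
  exact hfin.ballSupSlope_nonneg hK hs hst hX

lemma kernelDensity_le_ballSupSlope (hfin : HasFiniteBallSup X u) (hK : MonotoneOn K (Ioi 0))
    (hs : 0 < s) (hst : s < t) (hX : Metric.closedBall x t ⊆ X) :
    kernelDensity K X u x ≤ ballSupSlope K u x s t := by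
  refine csInf_le ⟨0, ?_⟩ ⟨s, t, hs, hst, hX, rfl⟩
  rintro _ ⟨s, t, hs, hst, hX, rfl⟩
  exact hfin.ballSupSlope_nonneg hK hs hst hX

end HasFiniteBallSup

lemma exists_ballSupSlope_lt_of_kernelDensity_lt (hX : IsOpen X) (hx : x ∈ X) {θ : ℝ}
    (hθ : kernelDensity K X u x < θ) :
    ∃ s t, 0 < s ∧ s < t ∧ Metric.closedBall x t ⊆ X ∧ ballSupSlope K u x s t < θ := by
  obtain ⟨R, hR, hRX⟩ := Metric.nhds_basis_closedBall.mem_iff.1 (hX.mem_nhds hx)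
  have hne : {θ | ∃ s t, 0 < s ∧ s < t ∧ Metric.closedBall x t ⊆ X ∧
      ballSupSlope K u x s t = θ}.Nonempty :=
    ⟨_, R / 2, R, half_pos hR, half_lt_self hR, hRX, rfl⟩
  obtain ⟨_, ⟨s, t, hs, hst, htX, rfl⟩, hlt⟩ := exists_lt_of_csInf_lt hne hθ
  exact ⟨s, t, hs, hst, htX, hlt⟩

namespace HasFiniteBallSup

theorem exists_abs_ballSupSlope_sub_kernelDensity_lt (hfin : HasFiniteBallSup X u)
    (hK : MonotoneOn K (Ioi 0)) (hX : IsOpen X) (hx : x ∈ X)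
    (hslope : ∀ r s t, 0 < r → r < s → s < t → Metric.closedBall x t ⊆ X →
      ballSupSlope K u x r s ≤ ballSupSlope K u x s t) {ε : ℝ} (hε : 0 < ε) :
    ∃ δ > 0, ∀ s t, 0 < s → s < t → t < δ →
      |ballSupSlope K u x s t - kernelDensity K X u x| < ε := by
  obtain ⟨s₀, t₀, hs₀, hst₀, htX₀, hlt⟩ :=
    exists_ballSupSlope_lt_of_kernelDensity_lt (K := K) (u := u) hX hx (lt_add_of_pos_right _ hε)
  refine ⟨s₀, hs₀, fun s t hs hst ht => ?_⟩
  have hsX₀ := (Metric.closedBall_subset_closedBall hst₀.le).trans htX₀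
  have htX := (Metric.closedBall_subset_closedBall ht.le).trans hsX₀
  have hlower := hfin.kernelDensity_le_ballSupSlope hK hs hst htX
  have hupper : ballSupSlope K u x s t ≤ ballSupSlope K u x s₀ t₀ :=
    (hslope s t s₀ hs hst ht hsX₀).trans (hslope t s₀ t₀ (hs.trans hst) ht hst₀ htX₀)
  rw [abs_lt]
  constructor <;> linarith

lemma ballSupSlope_le_of_dist (hfin : HasFiniteBallSup X u) (hK : MonotoneOn K (Ioi 0))
    (hs : 0 < s) (hX : Metric.closedBall x t ⊆ X) (hlt : s + dist x' x < t - dist x' x) :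
    ballSupSlope K u x' (s + dist x' x) (t - dist x' x) ≤
      ((ballSup u x t).toReal - (ballSup u x s).toReal) /
        (K (t - dist x' x) - K (s + dist x' x)) := by
  set d := dist x' x
  have hd0 : 0 ≤ d := dist_nonneg
  have houter : Metric.closedBall x' (t - d) ⊆ Metric.closedBall x t :=
    Metric.closedBall_subset_closedBall' (by linarith)
  have hinner : Metric.closedBall x s ⊆ Metric.closedBall x' (s + d) :=
    Metric.closedBall_subset_closedBall' (by rw [dist_comm x x'])
  have hsd : 0 < s + d := by linarith
  have htd : 0 < t - d := hsd.trans hlt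
  have hX' := houter.trans hX
  refine div_le_div_of_nonneg_right (sub_le_sub ?_ ?_) (sub_nonneg.2 (hK hsd htd hlt.le))
  · exact hfin.toReal_ballSup_mono htd (by linarith) houter hX
  · exact hfin.toReal_ballSup_mono hs hsd hinner
      ((Metric.closedBall_subset_closedBall hlt.le).trans hX')

theorem upperSemicontinuousOn_kernelDensity (hfin : HasFiniteBallSup X u) (hX : IsOpen X)
    (hK : StrictMonoOn K (Ioi 0)) (hKcont : ContinuousOn K (Ioi 0)) :
    UpperSemicontinuousOn (kernelDensity K X u) X := by
  intro x hx θ hθ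
  obtain ⟨s, t, hs, hst, htX, hlt⟩ := exists_ballSupSlope_lt_of_kernelDensity_lt hX hx hθ
  have ht := hs.trans hst
  have hdist : Tendsto (fun x' => dist x' x) (𝓝[X] x) (𝓝 0) :=
    (tendsto_iff_dist_tendsto_zero.1 tendsto_id).mono_left nhdsWithin_le_nhds
  have houter : Tendsto (fun x' => t - dist x' x) (𝓝[X] x) (𝓝 t) := by
    simpa using hdist.const_sub t
  have hinner : Tendsto (fun x' => s + dist x' x) (𝓝[X] x) (𝓝 s) := by
    simpa using hdist.const_add s
  have hKlim : ∀ {r : ℝ}, 0 < r → Tendsto K (𝓝 r) (𝓝 (K r)) := fun hr =>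
    hKcont.continuousAt (Ioi_mem_nhds hr)
  have hquot : Tendsto (fun x' => ((ballSup u x t).toReal - (ballSup u x s).toReal) /
      (K (t - dist x' x) - K (s + dist x' x))) (𝓝[X] x) (𝓝 (ballSupSlope K u x s t)) :=
    tendsto_const_nhds.div (((hKlim ht).comp houter).sub ((hKlim hs).comp hinner))
      (sub_ne_zero.2 (hK hs ht hst).ne')
  filter_upwards [hquot.eventually_lt_const hlt, hinner.eventually_lt houter hst]
    with x' hquotlt hradii
  have hX' : Metric.closedBall x' (t - dist x' x) ⊆ X :=
    (Metric.closedBall_subset_closedBall' (by linarith)).trans htX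
  calc kernelDensity K X u x'
      ≤ ballSupSlope K u x' (s + dist x' x) (t - dist x' x) :=
        hfin.kernelDensity_le_ballSupSlope hK.monotoneOn (by positivity) hradii hX'
    _ ≤ _ := hfin.ballSupSlope_le_of_dist hK.monotoneOn hs htX hradii
    _ < θ := hquotlt

end HasFiniteBallSup

end Density

section RieszConvexity

variable {n : ℕ} {F : Set (Matrix (Fin n) (Fin n) ℝ)} {p : ℝ} {X : Set (EucSp n)}
  {u : EucSp n → EReal} {x : EucSp n} {r s t : ℝ}

theorem IsFSubharmonicOn.ballSup_le_rieszKernel (hu : IsFSubharmonicOn F X u)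
    (hF : IsConeSubequation F) (hchar : HasRieszChar F p) {a b : ℝ} (hb : 0 < b) (hr : 0 < r)
    (hrs : r ≤ s) (hst : s ≤ t) (hX : Metric.closedBall x t ⊆ X)
    (hin : ballSup u x r ≤ (a + b * rieszKernel p r : ℝ))
    (hout : ballSup u x t ≤ (a + b * rieszKernel p t : ℝ)) :
    ballSup u x s ≤ (a + b * rieszKernel p s : ℝ) := by
  have hmono : ∀ {ρ σ : ℝ}, 0 < ρ → ρ ≤ σ →
      ((a + b * rieszKernel p ρ : ℝ) : EReal) ≤ (a + b * rieszKernel p σ : ℝ) := fun hρ hρσ => by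
    have := (strictMonoOn_rieszKernel p).monotoneOn hρ (hρ.trans_le hρσ) hρσ
    exact_mod_cast by gcongr
  refine sSup_le (forall_mem_image.2 fun y hy => ?_)
  rw [mem_closedBall_iff_norm] at hy
  rcases le_total ‖y - x‖ r with hyr | hry
  · exact (le_ballSup u hyr).trans (hin.trans (hmono hr hrs))
  · refine (hu.le_rieszKernel_of_frontier hF hchar hr hb
      ((closedAnnulus_subset_closedBall x r t).trans hX) (fun z hz => ?_) y
      ⟨hry, hy.trans hst⟩).trans (hmono (hr.trans_le hry) hy)
    rcases norm_sub_eq_of_mem_frontier_closedAnnulus hz with hzr | hzt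
    · exact (le_ballSup u hzr.le).trans (hzr ▸ hin)
    · exact (le_ballSup u hzt.le).trans (hzt ▸ hout)

lemma div_sub_le_div_sub_of_le_affine {k₁ k₂ k₃ m₁ m₂ m₃ : ℝ} (hk₁₂ : k₁ < k₂) (hk₂₃ : k₂ < k₃)
    (hm₁₂ : m₁ ≤ m₂) (hm₂₃ : m₂ ≤ m₃)
    (haff : ∀ a b, 0 < b → a + b * k₁ = m₁ → a + b * k₃ = m₃ → m₂ ≤ a + b * k₂) :
    (m₂ - m₁) / (k₂ - k₁) ≤ (m₃ - m₂) / (k₃ - k₂) := by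
  rcases (hm₁₂.trans hm₂₃).eq_or_lt with heq | hlt
  · simp [le_antisymm (heq ▸ hm₂₃) hm₁₂, heq]
  · obtain ⟨b, hb⟩ : ∃ b, b * (k₃ - k₁) = m₃ - m₁ :=
      ⟨_, div_mul_cancel₀ _ (sub_ne_zero.2 (hk₁₂.trans hk₂₃).ne')⟩
    have hbpos : 0 < b := pos_of_mul_pos_left (hb ▸ sub_pos.2 hlt) (by linarith)
    have hm₂ : m₂ ≤ m₁ - b * k₁ + b * k₂ := haff _ b hbpos (by ring) (by linarith)
    calc (m₂ - m₁) / (k₂ - k₁) ≤ b := (div_le_iff₀ (sub_pos.2 hk₁₂)).2 (by linarith)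
      _ ≤ (m₃ - m₂) / (k₃ - k₂) := (le_div_iff₀ (sub_pos.2 hk₂₃)).2 (by linarith)

theorem IsFSubharmonicOn.ballSupSlope_rieszKernel_mono (hu : IsFSubharmonicOn F X u)
    (hF : IsConeSubequation F) (hchar : HasRieszChar F p) (hfin : HasFiniteBallSup X u)
    (hr : 0 < r) (hrs : r < s) (hst : s < t) (hX : Metric.closedBall x t ⊆ X) :
    ballSupSlope (rieszKernel p) u x r s ≤ ballSupSlope (rieszKernel p) u x s t := by
  have hs := hr.trans hrs
  have ht := hs.trans hst
  have hK := strictMonoOn_rieszKernel p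
  have hrs' : Metric.closedBall x r ⊆ Metric.closedBall x s :=
    Metric.closedBall_subset_closedBall hrs.le
  have hst' : Metric.closedBall x s ⊆ Metric.closedBall x t :=
    Metric.closedBall_subset_closedBall hst.le
  have hcoe : ∀ {ρ : ℝ}, 0 < ρ → Metric.closedBall x ρ ⊆ X →
      ballSup u x ρ = ((ballSup u x ρ).toReal : EReal) := fun hρ hρX =>
    (EReal.coe_toReal (hfin hρ hρX).2 (hfin hρ hρX).1).symm
  refine div_sub_le_div_sub_of_le_affine (hK hr hs hrs) (hK hs ht hst)
    (hfin.toReal_ballSup_mono hr hs hrs' (hst'.trans hX))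
    (hfin.toReal_ballSup_mono hs ht hst' hX) fun a b hb har hat => ?_
  rw [← EReal.coe_le_coe_iff, ← hcoe hs (hst'.trans hX)]
  refine hu.ballSup_le_rieszKernel hF hchar hb hr hrs.le hst.le hX ?_ ?_
  · rw [har, ← hcoe hr (hrs'.trans (hst'.trans hX))]
  · rw [hat, ← hcoe ht hX]

end RieszConvexity

theorem stmt11_general {n : ℕ} {p : ℝ} {F : Set (Matrix (Fin n) (Fin n) ℝ)}
    (hF : IsConeSubequation F) (hchar : HasRieszChar F p)
    {X : Set (EucSp n)} (hX : IsOpen X)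
    {u : EucSp n → EReal} (hu : IsFSubharmonicOn F X u)
    (hne : ∀ y : EucSp n, ∀ r : ℝ, 0 < r → Metric.closedBall y r ⊆ X →
      ∃ x ∈ Metric.closedBall y r, u x ≠ ⊥) :
    ∃ Θ : EucSp n → ℝ,
      (∀ x ∈ X, 0 ≤ Θ x ∧
        ∀ ε : ℝ, 0 < ε → ∃ δ : ℝ, 0 < δ ∧ ∀ s t : ℝ, 0 < s → s < t → t < δ →
          |((ballSup u x t).toReal - (ballSup u x s).toReal) /
              (rieszKernel p t - rieszKernel p s) - Θ x| < ε) ∧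
      UpperSemicontinuousOn Θ X := by
  have hfin := hu.hasFiniteBallSup hne
  have hK := strictMonoOn_rieszKernel p
  refine ⟨kernelDensity (rieszKernel p) X u, fun x hx => ⟨?_, fun ε hε => ?_⟩, ?_⟩
  · exact hfin.kernelDensity_nonneg hK.monotoneOn x
  · exact hfin.exists_abs_ballSupSlope_sub_kernelDensity_lt hK.monotoneOn hX hx
      (fun _ _ _ => hu.ballSupSlope_rieszKernel_mono hF hchar hfin) hε
  · exact hfin.upperSemicontinuousOn_kernelDensity hX hK (continuousOn_rieszKernel p)

/-- Existence and upper semicontinuity of the density `Θ^M(u, ·)` of an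
`F`-subharmonic function. -/
theorem stmt11 (n : ℕ) (hn : 1 ≤ n) (p : ℝ)
    (F : Set (Matrix (Fin n) (Fin n) ℝ))
    (hF : IsConeSubequation F) (hST : STInvariant F) (hchar : HasRieszChar F p)
    (X : Set (EucSp n)) (hX : IsOpen X)
    (u : EucSp n → EReal) (hu : IsFSubharmonicOn F X u)
    (hne : ∀ y : EucSp n, ∀ r : ℝ, 0 < r → Metric.closedBall y r ⊆ X →
      ∃ x ∈ Metric.closedBall y r, u x ≠ ⊥) :
    ∃ Θ : EucSp n → ℝ,
      (∀ x ∈ X, 0 ≤ Θ x ∧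
        ∀ ε : ℝ, 0 < ε → ∃ δ : ℝ, 0 < δ ∧ ∀ s t : ℝ, 0 < s → s < t → t < δ →
          |((ballSup u x t).toReal - (ballSup u x s).toReal) /
              (rieszKernel p t - rieszKernel p s) - Θ x| < ε) ∧
      UpperSemicontinuousOn Θ X := by
  exact stmt11_general hF hchar hX hu hne

end
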